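/- Let η, ū : ℝ² → ℝ be infinitely differentiable functions of (x,t) with η(x,t) > 0 for all (x,t), and let ρ ≠ 0, g, ε be real constants. Define v = (η³ ū_x)_x / (3η) and μ = ρ(ū − ε² v). Assume η and ū satisfy the Serre–Green–Naghdi system: η_t + (η ū)_x = 0 and ū_t + ū ū_x + g η_x − (ε²/(3η)) ( η³ ( ū_{tx} + ū ū_{xx} − ū_x² ) )_x = 0. Then pointwise on ℝ²: μ_t + (1/ρ) μ μ_x + g ρ η_x − (ε²/(2ρ)) (η² μ_x²)_x = ρ ε⁴ ( v v_x + (η² ū_x v_x)_x ) − (ρ ε⁶ / 2) (η² v_x²)_x; in particular (η, μ) satisfies the second canonical water-wave (Hamiltonian) equation up to the displayed explicit O(ε⁴) remainder. -/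

import Mathlib

/-- Partial derivative in the spatial variable `x` (first argument). -/
noncomputable def dX (f : ℝ → ℝ → ℝ) : ℝ → ℝ → ℝ :=
  fun x t => deriv (fun x' => f x' t) x

/-- Partial derivative in time `t` (second argument). -/
noncomputable def dT (f : ℝ → ℝ → ℝ) : ℝ → ℝ → ℝ :=
  fun x t => deriv (fun t' => f x t') t

def SS (f : ℝ → ℝ → ℝ) : Prop := ContDiff ℝ (⊤ : ℕ∞) (fun p : ℝ × ℝ => f p.1 p.2)

lemma SS.hasX {f : ℝ → ℝ → ℝ} (h : SS f) (x t : ℝ) :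
    HasDerivAt (fun x' => f x' t) (dX f x t) x := by
  have h1 : Differentiable ℝ (fun p : ℝ × ℝ => f p.1 p.2) := h.differentiable (by simp)
  have h2 : Differentiable ℝ (fun x' : ℝ => f x' t) :=
    h1.comp (f := fun x' : ℝ => (x', t)) (by fun_prop)
  exact (h2 x).hasDerivAt

lemma SS.hasT {f : ℝ → ℝ → ℝ} (h : SS f) (x t : ℝ) :
    HasDerivAt (fun t' => f x t') (dT f x t) t := by
  have h1 : Differentiable ℝ (fun p : ℝ × ℝ => f p.1 p.2) := h.differentiable (by simp)
  have h2 : Differentiable ℝ (fun t' : ℝ => f x t') :=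
    h1.comp (f := fun t' : ℝ => (x, t')) (by fun_prop)
  exact (h2 t).hasDerivAt

lemma SS.dX_eq {f : ℝ → ℝ → ℝ} (h : SS f) (x t : ℝ) :
    dX f x t = fderiv ℝ (fun p : ℝ × ℝ => f p.1 p.2) (x, t) (1, 0) := by
  have h1 : Differentiable ℝ (fun p : ℝ × ℝ => f p.1 p.2) := h.differentiable (by simp)
  have h2 : HasDerivAt (fun x' : ℝ => (x', t)) ((1 : ℝ), (0 : ℝ)) x :=
    (hasDerivAt_id x).prodMk (hasDerivAt_const x t)
  exact ((h1 (x, t)).hasFDerivAt.comp_hasDerivAt x h2).deriv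

lemma SS.dT_eq {f : ℝ → ℝ → ℝ} (h : SS f) (x t : ℝ) :
    dT f x t = fderiv ℝ (fun p : ℝ × ℝ => f p.1 p.2) (x, t) (0, 1) := by
  have h1 : Differentiable ℝ (fun p : ℝ × ℝ => f p.1 p.2) := h.differentiable (by simp)
  have h2 : HasDerivAt (fun t' : ℝ => (x, t')) ((0 : ℝ), (1 : ℝ)) t :=
    (hasDerivAt_const t x).prodMk (hasDerivAt_id t)
  exact ((h1 (x, t)).hasFDerivAt.comp_hasDerivAt t h2).deriv

lemma SS.sX {f : ℝ → ℝ → ℝ} (h : SS f) : SS (dX f) := by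
  have h1 : ContDiff ℝ (⊤ : ℕ∞) (fderiv ℝ (fun p : ℝ × ℝ => f p.1 p.2)) :=
    ContDiff.fderiv_right (m := (⊤ : ℕ∞)) h (by simp)
  have h2 := h1.clm_apply (contDiff_const (c := ((1 : ℝ), (0 : ℝ))))
  unfold SS
  convert h2 using 2 with p
  exact h.dX_eq p.1 p.2

lemma SS.sT {f : ℝ → ℝ → ℝ} (h : SS f) : SS (dT f) := by
  have h1 : ContDiff ℝ (⊤ : ℕ∞) (fderiv ℝ (fun p : ℝ × ℝ => f p.1 p.2)) :=
    ContDiff.fderiv_right (m := (⊤ : ℕ∞)) h (by simp)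
  have h2 := h1.clm_apply (contDiff_const (c := ((0 : ℝ), (1 : ℝ))))
  unfold SS
  convert h2 using 2 with p
  exact h.dT_eq p.1 p.2

lemma SS.comm {f : ℝ → ℝ → ℝ} (h : SS f) (x t : ℝ) :
    dT (dX f) x t = dX (dT f) x t := by
  rw [h.sX.dT_eq, h.sT.dX_eq]
  have h1 : ContDiff ℝ (⊤ : ℕ∞) (fderiv ℝ (fun p : ℝ × ℝ => f p.1 p.2)) :=
    ContDiff.fderiv_right (m := (⊤ : ℕ∞)) h (by simp)
  have h3 : DifferentiableAt ℝ (fderiv ℝ (fun p : ℝ × ℝ => f p.1 p.2)) (x, t) :=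
    h1.differentiable (by simp) (x, t)
  have e1 : (fun p : ℝ × ℝ => dX f p.1 p.2) =
      fun p => fderiv ℝ (fun p : ℝ × ℝ => f p.1 p.2) p (1, 0) := by
    funext p; exact h.dX_eq p.1 p.2
  have e2 : (fun p : ℝ × ℝ => dT f p.1 p.2) =
      fun p => fderiv ℝ (fun p : ℝ × ℝ => f p.1 p.2) p (0, 1) := by
    funext p; exact h.dT_eq p.1 p.2
  rw [e1, e2, fderiv_clm_apply h3 (by fun_prop), fderiv_clm_apply h3 (by fun_prop)]
  have hs : IsSymmSndFDerivAt ℝ (fun p : ℝ × ℝ => f p.1 p.2) (x, t) :=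
    (ContDiff.contDiffAt h).isSymmSndFDerivAt (by simp; exact WithTop.coe_le_coe.2 le_top)
  simpa using hs (0, 1) (1, 0)

/-- If `(η, ū)` solves the Serre–Green–Naghdi system, then the canonical momentum
`μ = ρ(ū − ε²v)` satisfies the second canonical water-wave equation up to an
explicit `O(ε⁴)` remainder. -/
theorem SGN_implies_canonical_momentum_equation
    (η u : ℝ → ℝ → ℝ)
    (hη : ContDiff ℝ (⊤ : ℕ∞) (fun p : ℝ × ℝ => η p.1 p.2))
    (hu : ContDiff ℝ (⊤ : ℕ∞) (fun p : ℝ × ℝ => u p.1 p.2))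
    (hηpos : ∀ x t, 0 < η x t)
    (ρ g ε : ℝ) (hρ : ρ ≠ 0)
    (v : ℝ → ℝ → ℝ)
    (hv : v = fun x t => dX (fun x' t' => (η x' t')^3 * dX u x' t') x t / (3 * η x t))
    (μ : ℝ → ℝ → ℝ)
    (hμ : μ = fun x t => ρ * (u x t - ε^2 * v x t))
    (hmass : ∀ x t, dT η x t + dX (fun x' t' => η x' t' * u x' t') x t = 0)
    (hmom : ∀ x t,
      dT u x t + u x t * dX u x t + g * dX η x t
        - (ε^2/(3 * η x t)) *
            dX (fun x' t' => (η x' t')^3 *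
              (dT (dX u) x' t' + u x' t' * dX (dX u) x' t' - (dX u x' t')^2)) x t = 0) :
    ∀ x t,
      dT μ x t + (1/ρ) * μ x t * dX μ x t + g * ρ * dX η x t
        - (ε^2/(2*ρ)) * dX (fun x' t' => (η x' t')^2 * (dX μ x' t')^2) x t
      = ρ * ε^4 * (v x t * dX v x t
            + dX (fun x' t' => (η x' t')^2 * dX u x' t' * dX v x' t') x t)
        - (ρ * ε^6 / 2) * dX (fun x' t' => (η x' t')^2 * (dX v x' t')^2) x t := by
  have Sη : SS η := hη
  have Su : SS u := hu
  have Sηx := Sη.sX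
  have Sux := Su.sX
  have Suxx := Sux.sX
  have hv' : v = fun x t => η x t * dX η x t * dX u x t + (η x t)^2 * dX (dX u) x t / 3 := by
    rw [hv]
    funext x t
    have h0 := (hηpos x t).ne'
    have h1 : dX (fun x' t' => (η x' t')^3 * dX u x' t') x t = _ :=
      (((Sη.hasX x t).pow 3).mul (Sux.hasX x t)).deriv
    rw [h1]
    simp only [Pi.pow_apply]
    field_simp
    push_cast
    ring
  have Sv : SS v := by
    rw [hv']
    unfold SS at *
    fun_prop
  have Svx := Sv.sX
  have hmass' : dT η = fun x t => -(dX η x t * u x t + η x t * dX u x t) := by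
    funext x t
    have h1 : dX (fun x' t' => η x' t' * u x' t') x t = _ :=
      ((Sη.hasX x t).mul (Su.hasX x t)).deriv
    have := hmass x t
    rw [h1] at this
    linarith
  intro x t
  have h0 := (hηpos x t).ne'
  have hηxt : dT (dX η) x t = -(dX (dX η) x t * u x t + 2 * dX η x t * dX u x t
      + η x t * dX (dX u) x t) := by
    rw [Sη.comm, hmass']
    refine ((((Sηx.hasX x t).mul (Su.hasX x t)).add
      ((Sη.hasX x t).mul (Sux.hasX x t))).neg.congr_deriv ?_).deriv
    ring
  have huxxt : dT (dX (dX u)) x t = dX (dT (dX u)) x t := Sux.comm x t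
  have hvt : dT v x t = dT η x t * dX η x t * dX u x t + η x t * dT (dX η) x t * dX u x t
      + η x t * dX η x t * dT (dX u) x t + 2 * η x t * dT η x t * dX (dX u) x t / 3
      + (η x t)^2 * dT (dX (dX u)) x t / 3 := by
    rw [hv']
    refine (((((Sη.hasT x t).mul (Sηx.hasT x t)).mul (Sux.hasT x t)).add
      ((((Sη.hasT x t).pow 2).mul (Suxx.hasT x t)).div_const 3)).congr_deriv ?_).deriv
    simp only [Pi.pow_apply, Pi.mul_apply]
    push_cast
    ring
  have hvx : dX v x t = dX η x t * dX η x t * dX u x t + η x t * dX (dX η) x t * dX u x t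
      + η x t * dX η x t * dX (dX u) x t + 2 * η x t * dX η x t * dX (dX u) x t / 3
      + (η x t)^2 * dX (dX (dX u)) x t / 3 := by
    rw [hv']
    refine (((((Sη.hasX x t).mul (Sηx.hasX x t)).mul (Sux.hasX x t)).add
      ((((Sη.hasX x t).pow 2).mul (Suxx.hasX x t)).div_const 3)).congr_deriv ?_).deriv
    simp only [Pi.pow_apply, Pi.mul_apply]
    push_cast
    ring
  have hvv : v x t = η x t * dX η x t * dX u x t + (η x t)^2 * dX (dX u) x t / 3 := by
    rw [hv']
  have hF : dX (fun x' t' => (η x' t')^3 *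
      (dT (dX u) x' t' + u x' t' * dX (dX u) x' t' - (dX u x' t')^2)) x t
      = 3 * (η x t)^2 * dX η x t * (dT (dX u) x t + u x t * dX (dX u) x t - (dX u x t)^2)
      + (η x t)^3 * (dX (dT (dX u)) x t + u x t * dX (dX (dX u)) x t
        - dX u x t * dX (dX u) x t) := by
    refine ((((Sη.hasX x t).pow 3).mul (((Sux.sT.hasX x t).add
      ((Su.hasX x t).mul (Suxx.hasX x t))).sub ((Sux.hasX x t).pow 2))).congr_deriv ?_).deriv
    simp only [Pi.pow_apply, Pi.mul_apply, Pi.add_apply, Pi.sub_apply]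
    push_cast
    ring
  have hμx : dX μ = fun x t => ρ * (dX u x t - ε^2 * dX v x t) := by
    rw [hμ]
    funext x t
    exact (((Su.hasX x t).sub ((Sv.hasX x t).const_mul (ε^2))).const_mul ρ).deriv
  have hμt : dT μ x t = ρ * (dT u x t - ε^2 * dT v x t) := by
    rw [hμ]
    exact (((Su.hasT x t).sub ((Sv.hasT x t).const_mul (ε^2))).const_mul ρ).deriv
  have hG1 : dX (fun x' t' => (η x' t')^2 * (dX μ x' t')^2) x t
      = 2 * η x t * dX η x t * (ρ * (dX u x t - ε^2 * dX v x t))^2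
      + 2 * (η x t)^2 * ρ^2 * (dX u x t - ε^2 * dX v x t)
        * (dX (dX u) x t - ε^2 * dX (dX v) x t) := by
    rw [hμx]
    refine ((((Sη.hasX x t).pow 2).mul ((((Sux.hasX x t).sub
      ((Svx.hasX x t).const_mul (ε^2))).const_mul ρ).pow 2)).congr_deriv ?_).deriv
    simp only [Pi.pow_apply, Pi.mul_apply, Pi.add_apply, Pi.sub_apply]
    push_cast
    ring
  have hG2 : dX (fun x' t' => (η x' t')^2 * dX u x' t' * dX v x' t') x t
      = 2 * η x t * dX η x t * dX u x t * dX v x t + (η x t)^2 * dX (dX u) x t * dX v x t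
      + (η x t)^2 * dX u x t * dX (dX v) x t := by
    refine (((((Sη.hasX x t).pow 2).mul (Sux.hasX x t)).mul
      (Svx.hasX x t)).congr_deriv ?_).deriv
    simp only [Pi.pow_apply, Pi.mul_apply]
    push_cast
    ring
  have hG3 : dX (fun x' t' => (η x' t')^2 * (dX v x' t')^2) x t
      = 2 * η x t * dX η x t * (dX v x t)^2
      + 2 * (η x t)^2 * dX v x t * dX (dX v) x t := by
    refine ((((Sη.hasX x t).pow 2).mul ((Svx.hasX x t).pow 2)).congr_deriv ?_).deriv
    simp only [Pi.pow_apply]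
    push_cast
    ring
  have hm := hmom x t
  rw [hF] at hm
  have hut : dT u x t = -(u x t * dX u x t + g * dX η x t) + ε^2 * (η x t * dX η x t *
      (dT (dX u) x t + u x t * dX (dX u) x t - (dX u x t)^2)
      + (η x t)^2 / 3 * (dX (dT (dX u)) x t + u x t * dX (dX (dX u)) x t
        - dX u x t * dX (dX u) x t)) := by
    rw [← sub_eq_zero, ← hm]
    field_simp
    ring
  have hηt : dT η x t = -(dX η x t * u x t + η x t * dX u x t) := by rw [hmass']
  have key : dT v x t + u x t * dX v x t + v x t * dX u x t
      = (η x t * dX η x t *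
      (dT (dX u) x t + u x t * dX (dX u) x t - (dX u x t)^2)
      + (η x t)^2 / 3 * (dX (dT (dX u)) x t + u x t * dX (dX (dX u)) x t
        - dX u x t * dX (dX u) x t))
      - (η x t * dX η x t * (dX u x t)^2 + (η x t)^2 * dX u x t * dX (dX u) x t) := by
    rw [hvt, hvx, hvv, hηxt, huxxt, hηt]
    ring
  have hμ0 : μ x t = ρ * (u x t - ε^2 * v x t) := by rw [hμ]
  rw [hG1, hG2, hG3, hμt, hμx, hμ0, hut]
  have hvt2 := eq_sub_of_add_eq (eq_sub_of_add_eq key)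
  rw [hvt2]
  field_simp
  ring
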